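/- Let R be a nonzero commutative ring and let X be the generic n×n matrix over R (entries distinct indeterminates x_{ij} in R[x_{ij}]). Then the Laplace products X{A|B} with A, B ⊆ {1,…,n}, |A| = |B|, and both A and B good, form a basis of the R-submodule of R[x_{ij}] spanned by all Laplace products X{S|T}; in particular they are linearly independent over R and every Laplace product X{S|T} is an R-linear combination (with coefficients ±1) of them. -/

import Mathlib

/-!
Grouping the Leibniz terms of `det X` by the image of `A` gives
`X{A|B} = ∑ sign σ ∏ x_{i,σ(i)}`, the sum over the permutations `σ` with `σ(A) = B`.

Spanning. Suppose `A` is not good. Then for some `a` the set `Ã` has more elements `≤ a` than `A`.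
Let `D` be the part of `A` up to `a` and `Q` the part of `Ã` beyond `a`. Inclusion–exclusion
expresses the sum of the `X{A'|B}` over all `A' ⊇ D` disjoint from `Q` as an integral combination
of Laplace products `X{Q ∪ J|C}` with `J ⊆ D`. All other `A'` have a smaller element sum, while
`|Q ∪ J| < |Ã|`, so that passing to complements gives sets larger than `A`. This rewriting
terminates; columns are treated by transposition.

Independence. For good `A` and `B`, set `x_{ij}` to `1` if `i` has the same rank in its block of
`{A, Ã}` as `j` in its block of `{B, B̃}`, and to `0` otherwise. Then `X{A|B}` becomes `±1`. If
`X{C|D}` does not vanish, the rows in `C` have distinct ranks, so sending each of them to the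
element of `A` of that rank is injective, and it lowers elements because `A` is good; similarly for
`D` and `B`. The matrix of these values, ordered by weights that such lowering increases, is
therefore triangular with units on the diagonal.
-/

open Finset

/-- The minor `X(A|B)`: the determinant of the submatrix of `X` with row indices in `A` and
column indices in `B`, taken in increasing order; `0` if `|A| ≠ |B|`. -/
def minorM {m n : ℕ} {R : Type*} [CommRing R]
    (X : Matrix (Fin m) (Fin n) R) (A : Finset (Fin m)) (B : Finset (Fin n)) : R :=
  if h : A.card = B.card then
    (Matrix.of fun i j : Fin A.card =>
      X (A.orderEmbOfFin rfl i) (B.orderEmbOfFin h.symm j)).det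
  else 0

/-- The Laplace product `X{A|B} = (-1)^(ΣA+ΣB) X(A|B) X(Ã|B̃)`, where elements of
`Fin n` are counted as the numbers `1,…,n` (so `i : Fin n` counts as `i+1`). -/
def lap {n : ℕ} {R : Type*} [CommRing R]
    (X : Matrix (Fin n) (Fin n) R) (A B : Finset (Fin n)) : R :=
  (-1 : R) ^ (∑ i ∈ A, ((i : ℕ) + 1) + ∑ j ∈ B, ((j : ℕ) + 1)) *
    (minorM X A B * minorM X Aᶜ Bᶜ)

/-- The partial order `S ≤ T` on finite subsets of a linearly ordered set:
writing `S = {s₁<⋯<s_p}` and `T = {t₁<⋯<t_q}`, it means `p ≥ q` and `s_ν ≤ t_ν` for `ν ≤ q`. -/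
def domLE {α : Type*} [LinearOrder α] (S T : Finset α) : Prop :=
  T.card ≤ S.card ∧ ∀ (ν : ℕ) (hT : ν < (T.sort (· ≤ ·)).length)
    (hS : ν < (S.sort (· ≤ ·)).length),
    (S.sort (· ≤ ·))[ν] ≤ (T.sort (· ≤ ·))[ν]

/-- A subset `S ⊆ {1,…,n}` is good if `S ≤ S̃` where `S̃` is the complement of `S`. -/
def goodSet {n : ℕ} (S : Finset (Fin n)) : Prop := domLE S Sᶜ

/-- The generic `m×n` matrix, whose entries are the indeterminates `x_{ij}`. -/
noncomputable def genX (m n : ℕ) (R : Type*) [CommRing R] :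
    Matrix (Fin m) (Fin n) (MvPolynomial (Fin m × Fin n) R) :=
  Matrix.of fun i j => MvPolynomial.X (i, j)
/-- The good Laplace products of the generic matrix: those `X{A|B}` with `|A| = |B|`
and both `A` and `B` good. -/
noncomputable def goodLap (n : ℕ) (R : Type*) [CommRing R]
    (g : {p : Finset (Fin n) × Finset (Fin n) //
      p.1.card = p.2.card ∧ goodSet p.1 ∧ goodSet p.2}) :
    MvPolynomial (Fin n × Fin n) R :=
  lap (genX n n R) g.1.1 g.1.2

namespace LaplaceProduct

open Equiv
open scoped Matrix

section SignOfPartition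

variable {α : Type*} [LinearOrder α] {a b : α}

lemma swap_lt_swap_of_covBy (hab : a ⋖ b) {x y : α} (hxy : x < y) (hne : ¬(x = a ∧ y = b)) :
    swap a b x < swap a b y := by
  have hle : ∀ z, z < b → z ≤ a := fun _ => hab.le_of_lt
  have hge : ∀ z, a < z → b ≤ z := fun _ => hab.ge_of_gt
  have hlt := hab.lt
  simp only [swap_apply_def]
  split_ifs <;> grind

lemma orderEmbOfFin_map_swap (hab : a ⋖ b) {A A' : Finset α}
    (hA' : A' = A.map (swap a b).toEmbedding)
    (hA : ¬(a ∈ A ∧ b ∈ A)) {m : ℕ} (hm : #A = m) (hm' : #A' = m) (i : Fin m) :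
    A'.orderEmbOfFin hm' i = swap a b (A.orderEmbOfFin hm i) := by
  have hmem (i : Fin m) : A.orderEmbOfFin hm i ∈ A := orderEmbOfFin_mem A hm i
  have hmono : StrictMono fun i => swap a b (A.orderEmbOfFin hm i) := fun x y hxy =>
    swap_lt_swap_of_covBy hab ((A.orderEmbOfFin hm).strictMono hxy)
      fun h => hA ⟨h.1 ▸ hmem x, h.2 ▸ hmem y⟩
  exact (congrFun (orderEmbOfFin_unique hm' (fun i => by simp [hA', hmem]) hmono) i).symm

variable [Fintype α]

lemma finSumEquivOfFinset_map_swap (hab : a ⋖ b) {A A' : Finset α}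
    (hA' : A' = A.map (swap a b).toEmbedding) (ha : a ∉ A) (hb : b ∈ A) {m k : ℕ}
    (hm : #A = m) (hk : #Aᶜ = k) (hm' : #A' = m) (hk' : #A'ᶜ = k) :
    finSumEquivOfFinset hm' hk' = (finSumEquivOfFinset hm hk).trans (swap a b) := by
  have hA'c : A'ᶜ = Aᶜ.map (swap a b).toEmbedding := by ext; simp [hA', mem_map_equiv]
  ext1 (i | i)
  · exact orderEmbOfFin_map_swap hab hA' (fun h => ha h.1) hm hm' i
  · exact orderEmbOfFin_map_swap hab hA'c (fun h => mem_compl.1 h.2 hb) hk hk' i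

end SignOfPartition

/-- The sum `ΣA` of the elements of `A`, counted as the numbers `1,…,n` as in `lap`. -/
def indexSum {n : ℕ} (A : Finset (Fin n)) : ℕ := ∑ i ∈ A, ((i : ℕ) + 1)

variable {n m k : ℕ}

lemma indexSum_map_swap {a b : Fin n} (hab : a ⋖ b) {A : Finset (Fin n)} (ha : a ∉ A) (hb : b ∈ A) :
    indexSum (A.map (swap a b).toEmbedding) + 1 = indexSum A := by
  have hval : (a : ℕ) + 1 = b := by simpa using hab
  have hmap : A.map (swap a b).toEmbedding = insert a (A.erase b) := by
    ext x
    simp only [mem_map_equiv, symm_swap, swap_apply_def, mem_insert, mem_erase]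
    grind
  rw [hmap, indexSum, indexSum, sum_insert (by simp [ha]), ← add_sum_erase A _ hb]
  omega

/-- Any adjacent pair `a ∉ A`, `a + 1 ∈ A` can be swapped, which changes both sides by a sign;
this stops at an initial segment. -/
lemma exists_isLowerSet_sign_eq {A : Finset (Fin n)} (hm : #A = m) (hk : #Aᶜ = k) :
    ∃ (A₀ : Finset (Fin n)) (hm₀ : #A₀ = m) (hk₀ : #A₀ᶜ = k), IsLowerSet (A₀ : Set (Fin n)) ∧
      Perm.sign ((finSumEquivOfFinset hm₀ hk₀).symm.trans (finSumEquivOfFinset hm hk)) =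
        (-1) ^ (indexSum A₀ + indexSum A) := by
  induction hw : indexSum A using Nat.strong_induction_on generalizing A with
  | _ w ih =>
  subst hw
  by_cases hlow : IsLowerSet (A : Set (Fin n))
  · exact ⟨A, hm, hk, hlow, by simp [← two_mul, pow_mul]⟩
  obtain ⟨a, b, hab, hb, ha⟩ : ∃ a b : Fin n, a ⋖ b ∧ b ∈ A ∧ a ∉ A := by
    by_contra! h
    exact hlow (isLowerSet_setOfPred.2 ((antitone_iff_forall_covBy (· ∈ A)).2 h))
  set A' := A.map (swap a b).toEmbedding with hA'
  have hm' : #A' = m := by rw [card_map, hm]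
  have hk' : #A'ᶜ = k := by rw [card_compl, hm', ← hm, ← card_compl, hk]
  have hsum : indexSum A' + 1 = indexSum A := indexSum_map_swap hab ha hb
  obtain ⟨A₀, hm₀, hk₀, hlow₀, hsign⟩ := ih (indexSum A') (by omega) hm' hk' rfl
  refine ⟨A₀, hm₀, hk₀, hlow₀, ?_⟩
  rw [finSumEquivOfFinset_map_swap hab hA' ha hb hm hk hm' hk', ← Equiv.trans_assoc,
    Perm.sign_trans, Perm.sign_swap hab.ne] at hsign
  rw [← hsum, ← add_assoc, pow_succ, ← hsign]
  simp

lemma sign_finSumEquivOfFinset {A B : Finset (Fin n)} (hA : #A = m) (hA' : #Aᶜ = k)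
    (hB : #B = m) (hB' : #Bᶜ = k) :
    Perm.sign ((finSumEquivOfFinset hA hA').symm.trans (finSumEquivOfFinset hB hB')) =
      (-1) ^ (indexSum A + indexSum B) := by
  obtain ⟨A₀, hA₀, hA₀', hlA, hsA⟩ := exists_isLowerSet_sign_eq hA hA'
  obtain ⟨B₀, hB₀, hB₀', hlB, hsB⟩ := exists_isLowerSet_sign_eq hB hB'
  obtain rfl : A₀ = B₀ := by
    rcases hlA.total hlB with h | h
    · exact eq_of_subset_of_card_le (coe_subset.1 h) (by omega)
    · exact (eq_of_subset_of_card_le (coe_subset.1 h) (by omega)).symm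
  have hcomp : (finSumEquivOfFinset hA hA').symm.trans (finSumEquivOfFinset hB hB') =
      ((finSumEquivOfFinset hA₀ hA₀').symm.trans (finSumEquivOfFinset hA hA')).symm.trans
        ((finSumEquivOfFinset hA₀ hA₀').symm.trans (finSumEquivOfFinset hB hB')) := by
    ext x; simp
  rw [hcomp, Perm.sign_trans, Perm.sign_symm, hsA, hsB, ← pow_add,
    show indexSum A₀ + indexSum B + (indexSum A₀ + indexSum A) =
      2 * indexSum A₀ + (indexSum A + indexSum B) by ring, pow_add, pow_mul]
  simp

section LaplaceExpansion

variable {R : Type*} [CommRing R]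

lemma minorM_eq_det {l : ℕ} (X : Matrix (Fin l) (Fin n) R) {A : Finset (Fin l)}
    {B : Finset (Fin n)} (hA : #A = m) (hB : #B = m) :
    minorM X A B = (X.submatrix (A.orderEmbOfFin hA) (B.orderEmbOfFin hB)).det := by
  subst hA
  rw [minorM, dif_pos hB.symm]
  rfl

lemma lap_eq_zero_of_card_ne (X : Matrix (Fin n) (Fin n) R) {A B : Finset (Fin n)}
    (hAB : #A ≠ #B) : lap X A B = 0 := by
  simp [lap, minorM, hAB]

/-- The term of the permutation `σ` in the Leibniz expansion of `det X`. -/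
def leibnizTerm (X : Matrix (Fin n) (Fin n) R) (σ : Perm (Fin n)) : R :=
  Perm.sign σ • ∏ i, X i (σ i)

/-- The matrix `X` with the entries outside the blocks `A × B` and `Ã × B̃` replaced by `0`. -/
def blockPart (X : Matrix (Fin n) (Fin n) R) (A B : Finset (Fin n)) : Matrix (Fin n) (Fin n) R :=
  Matrix.of fun i j => if (i ∈ A ↔ j ∈ B) then X i j else 0

lemma map_eq_iff_forall_mem_iff {α : Type*} {A B : Finset α} {σ : Perm α} :
    A.map σ.toEmbedding = B ↔ ∀ i, i ∈ A ↔ σ i ∈ B := by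
  rw [Finset.ext_iff, ← σ.forall_congr_right]
  simp

lemma det_blockPart (X : Matrix (Fin n) (Fin n) R) (A B : Finset (Fin n)) :
    (blockPart X A B).det = ∑ σ : Perm (Fin n) with A.map σ.toEmbedding = B, leibnizTerm X σ := by
  rw [← Matrix.det_transpose, Matrix.det_apply, sum_filter]
  refine sum_congr rfl fun σ _ => ?_
  simp only [blockPart, Matrix.transpose_apply, Matrix.of_apply, prod_ite_zero, mem_univ,
    true_imp_iff, ← map_eq_iff_forall_mem_iff, smul_ite, smul_zero, leibnizTerm]

lemma minorM_mul_minorM_compl (X : Matrix (Fin n) (Fin n) R) {A B : Finset (Fin n)}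
    (hA : #A = m) (hA' : #Aᶜ = k) (hB : #B = m) (hB' : #Bᶜ = k) :
    minorM X A B * minorM X Aᶜ Bᶜ =
      ((blockPart X A B).submatrix (finSumEquivOfFinset hA hA')
        (finSumEquivOfFinset hB hB')).det := by
  have memA (i) : A.orderEmbOfFin hA i ∈ A := orderEmbOfFin_mem _ _ _
  have memB (i) : B.orderEmbOfFin hB i ∈ B := orderEmbOfFin_mem _ _ _
  have memA' (i) : Aᶜ.orderEmbOfFin hA' i ∉ A := mem_compl.1 (orderEmbOfFin_mem _ _ _)
  have memB' (i) : Bᶜ.orderEmbOfFin hB' i ∉ B := mem_compl.1 (orderEmbOfFin_mem _ _ _)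
  rw [minorM_eq_det X hA hB, minorM_eq_det X hA' hB', ← Matrix.det_fromBlocks_zero₂₁ _ 0]
  congr 1
  ext (i | i) (j | j) <;> simp [blockPart, memA, memB, memA', memB']

theorem lap_eq_sum_leibnizTerm (X : Matrix (Fin n) (Fin n) R) (A B : Finset (Fin n)) :
    lap X A B = ∑ σ : Perm (Fin n) with A.map σ.toEmbedding = B, leibnizTerm X σ := by
  by_cases hAB : #A = #B
  · have hAB' : #Bᶜ = #Aᶜ := by rw [card_compl, card_compl, hAB]
    set eA := finSumEquivOfFinset (s := A) rfl rfl
    set eB := finSumEquivOfFinset hAB.symm hAB'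
    have hperm : (blockPart X A B).submatrix eA eB =
        ((blockPart X A B).submatrix id (eA.symm.trans eB)).submatrix eA eA := by
      ext; simp
    have hsign : Perm.sign (eA.symm.trans eB) = (-1) ^ (indexSum A + indexSum B) :=
      sign_finSumEquivOfFinset rfl rfl hAB.symm hAB'
    have hlap : lap X A B =
      (-1) ^ (indexSum A + indexSum B) * (minorM X A B * minorM X Aᶜ Bᶜ) := rfl
    rw [hlap, minorM_mul_minorM_compl X rfl rfl hAB.symm hAB', hperm,
      Matrix.det_submatrix_equiv_self, Matrix.det_permute', hsign, det_blockPart, ← mul_assoc]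
    push_cast
    rw [← mul_pow]
    simp
  · rw [lap_eq_zero_of_card_ne X hAB, filter_eq_empty_iff.2, sum_empty]
    rintro σ - rfl
    exact hAB (card_map _).symm

lemma lap_compl (X : Matrix (Fin n) (Fin n) R) (A B : Finset (Fin n)) :
    lap X Aᶜ Bᶜ = lap X A B := by
  simp only [lap_eq_sum_leibnizTerm, map_eq_iff_forall_mem_iff, mem_compl, not_iff_not]

lemma minorM_transpose (X : Matrix (Fin m) (Fin n) R) (A : Finset (Fin m)) (B : Finset (Fin n)) :
    minorM Xᵀ B A = minorM X A B := by
  by_cases hAB : #A = #B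
  · rw [minorM_eq_det Xᵀ rfl hAB, minorM_eq_det X hAB rfl, ← Matrix.det_transpose]
    rfl
  · rw [minorM, minorM, dif_neg hAB, dif_neg (Ne.symm hAB)]

lemma lap_transpose (X : Matrix (Fin n) (Fin n) R) (A B : Finset (Fin n)) :
    lap Xᵀ B A = lap X A B := by
  rw [lap, lap, minorM_transpose, minorM_transpose, add_comm]

end LaplaceExpansion

section Straightening

section DomLE

variable {α : Type*} [LinearOrder α] {S T : Finset α}

lemma card_filter_lt_orderEmbOfFin (hS : #S = k) (i : Fin k) :
    #{x ∈ S | x < S.orderEmbOfFin hS i} = (i : ℕ) := by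
  have hfilter : {x ∈ S | x < S.orderEmbOfFin hS i} =
      (Iio i).map (S.orderEmbOfFin hS).toEmbedding := by
    ext x
    simp only [mem_filter, mem_map, mem_Iio, RelEmbedding.coe_toEmbedding]
    constructor
    · rintro ⟨hx, hlt⟩
      obtain ⟨j, rfl⟩ : x ∈ Set.range (S.orderEmbOfFin hS) := by rwa [range_orderEmbOfFin]
      exact ⟨j, (S.orderEmbOfFin hS).lt_iff_lt.1 hlt, rfl⟩
    · rintro ⟨j, hj, rfl⟩
      exact ⟨orderEmbOfFin_mem _ _ _, (S.orderEmbOfFin hS).strictMono hj⟩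
  rw [hfilter, card_map, Fin.card_Iio]

lemma domLE_iff_orderEmbOfFin (hS : #S = m) (hT : #T = k) :
    domLE S T ↔ ∃ h : k ≤ m, ∀ i : Fin k,
      S.orderEmbOfFin hS (Fin.castLE h i) ≤ T.orderEmbOfFin hT i := by
  subst hS hT
  simp only [domLE, orderEmbOfFin_apply]
  exact ⟨fun ⟨h, hle⟩ => ⟨h, fun i => hle i (by simp) (by simp; omega)⟩,
    fun ⟨h, hle⟩ => ⟨h, fun i hi _ => hle ⟨i, by simpa using hi⟩⟩⟩

lemma domLE_of_card_filter_le (h : ∀ a ∈ T, #{x ∈ T | x ≤ a} ≤ #{x ∈ S | x ≤ a}) :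
    domLE S T := by
  have hcard : #T ≤ #S := by
    rcases T.eq_empty_or_nonempty with rfl | hT
    · simp
    · have hmax := h _ (T.max'_mem hT)
      rw [filter_true_of_mem fun x hx => T.le_max' x hx] at hmax
      exact hmax.trans (card_filter_le _ _)
  refine (domLE_iff_orderEmbOfFin rfl rfl).2 ⟨hcard, fun i => ?_⟩
  set s := S.orderEmbOfFin rfl (Fin.castLE hcard i)
  set t := T.orderEmbOfFin rfl i
  by_contra! hts
  have ht : t ∈ T := orderEmbOfFin_mem _ _ _
  have : (i : ℕ) < i := calc
    (i : ℕ) = #{x ∈ T | x < t} := (card_filter_lt_orderEmbOfFin rfl i).symm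
    _ < #{x ∈ T | x ≤ t} := card_lt_card <| by
      refine (ssubset_iff_of_subset fun x => ?_).2 ⟨t, by simp [ht], by simp⟩
      simp only [mem_filter]
      exact fun hx => ⟨hx.1, hx.2.le⟩
    _ ≤ #{x ∈ S | x ≤ t} := h t ht
    _ ≤ #{x ∈ S | x < s} := card_le_card fun x => by
      simp only [mem_filter]
      exact fun hx => ⟨hx.1, hx.2.trans_lt hts⟩
    _ = i := card_filter_lt_orderEmbOfFin rfl _
  exact lt_irrefl _ this

end DomLE

lemma indexSum_lt_of_sdiff {A B : Finset (Fin n)} (a : Fin n) (hcard : #A = #B) (hne : A ≠ B)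
    (hA : ∀ x ∈ A \ B, x ≤ a) (hB : ∀ x ∈ B \ A, a < x) : indexSum A < indexSum B := by
  have hpos : 0 < #(A \ B) := by
    rw [card_pos, sdiff_nonempty]
    exact fun h => hne (eq_of_subset_of_card_le h hcard.ge)
  refine sum_sdiff_lt_sum_sdiff.1 ?_
  calc ∑ i ∈ A \ B, ((i : ℕ) + 1) ≤ #(A \ B) • ((a : ℕ) + 1) :=
        sum_le_card_nsmul _ _ _ fun x hx => Nat.succ_le_succ (hA x hx)
    _ < #(A \ B) • ((a : ℕ) + 2) := by
        rw [smul_eq_mul, smul_eq_mul]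
        exact Nat.mul_lt_mul_of_pos_left (by omega) hpos
    _ = #(B \ A) • ((a : ℕ) + 2) := by rw [card_sdiff_comm hcard]
    _ ≤ ∑ i ∈ B \ A, ((i : ℕ) + 1) :=
        card_nsmul_le_sum _ _ _ fun x hx => Nat.succ_le_succ (Nat.succ_le_of_lt (hB x hx))

variable {R : Type*} [CommRing R] (X : Matrix (Fin n) (Fin n) R)

lemma map_subset_iff_forall_mem {α : Type*} {A B : Finset α} {σ : Perm α} :
    A.map σ.toEmbedding ⊆ B ↔ ∀ x ∈ A, σ x ∈ B :=
  forall_mem_map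

lemma sum_powersetCard_lap (A B : Finset (Fin n)) :
    ∑ C ∈ B.powersetCard #A, lap X A C =
      ∑ σ : Perm (Fin n) with A.map σ.toEmbedding ⊆ B, leibnizTerm X σ := by
  simp only [lap_eq_sum_leibnizTerm, sum_filter]
  rw [sum_comm]
  simp [mem_powersetCard]

lemma sum_lap_of_subset_of_disjoint (D Q B : Finset (Fin n)) :
    ∑ A with #A = #B ∧ D ⊆ A ∧ Disjoint Q A, lap X A B =
      ∑ σ : Perm (Fin n) with D.map σ.toEmbedding ⊆ B ∧ Q.map σ.toEmbedding ⊆ Bᶜ,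
        leibnizTerm X σ := by
  have hpreimage (A : Finset (Fin n)) (σ : Perm (Fin n)) :
      A.map σ.toEmbedding = B ↔ B.map σ.symm.toEmbedding = A := by
    constructor <;> rintro rfl <;> ext <;> simp
  have hD (σ : Perm (Fin n)) : D ⊆ B.map σ.symm.toEmbedding ↔ D.map σ.toEmbedding ⊆ B := by
    rw [map_subset_iff_forall_mem]
    simp only [subset_iff, mem_map_equiv, symm_symm]
  have hQ (σ : Perm (Fin n)) :
      Disjoint Q (B.map σ.symm.toEmbedding) ↔ Q.map σ.toEmbedding ⊆ Bᶜ := by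
    simp only [map_subset_iff_forall_mem, disjoint_left, mem_map_equiv, symm_symm, mem_compl]
  simp only [lap_eq_sum_leibnizTerm, hpreimage, sum_filter (M := R)]
  simp only [← sum_filter (s := univ) (p := fun A => #A = #B ∧ _)]
  rw [sum_comm]
  simp only [sum_ite_eq, mem_filter, mem_univ, true_and, card_map, hD, hQ]

/-- Inclusion–exclusion over the elements of `D` that `σ` maps outside `B`. -/
lemma garnir_relation (D Q B : Finset (Fin n)) :
    ∑ A with #A = #B ∧ D ⊆ A ∧ Disjoint Q A, lap X A B =
      ∑ J ∈ D.powerset, (-1 : ℤ) ^ #J • ∑ C ∈ Bᶜ.powersetCard #(Q ∪ J), lap X (Q ∪ J) C := by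
  have hincl := inclusion_exclusion_sum_inf_compl D
    (fun d => ({σ | σ d ∉ B} : Finset (Perm (Fin n))))
    (fun σ => if Q.map σ.toEmbedding ⊆ Bᶜ then leibnizTerm X σ else 0)
  have hinf_compl : D.inf (fun d => ({σ | σ d ∉ B} : Finset (Perm (Fin n)))ᶜ) =
      ({σ | D.map σ.toEmbedding ⊆ B} : Finset (Perm (Fin n))) := by
    ext σ
    simp only [mem_inf, mem_compl, mem_filter, mem_univ, true_and, not_not,
      map_subset_iff_forall_mem]
  have hinf (J : Finset (Fin n)) : J.inf (fun d => ({σ | σ d ∉ B} : Finset (Perm (Fin n)))) =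
      ({σ | J.map σ.toEmbedding ⊆ Bᶜ} : Finset (Perm (Fin n))) := by
    ext σ
    simp only [mem_inf, mem_compl, mem_filter, mem_univ, true_and, map_subset_iff_forall_mem]
  simp only [hinf_compl, hinf, ← sum_filter, filter_filter] at hincl
  rw [sum_lap_of_subset_of_disjoint, hincl]
  simp only [sum_powersetCard_lap, map_union, union_subset_iff, and_comm]

lemma lap_mem_of_not_goodSet (M : AddSubgroup R) {A B : Finset (Fin n)} (hAB : #A = #B)
    (hA : ¬ goodSet A) (hlarger : ∀ A' B', #A' = #B' → #A < #A' → lap X A' B' ∈ M)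
    (hsmaller : ∀ A', #A' = #B → indexSum A' < indexSum A → lap X A' B ∈ M) :
    lap X A B ∈ M := by
  obtain ⟨a, -, ha⟩ : ∃ a ∈ Aᶜ, #{x ∈ A | x ≤ a} < #{x ∈ Aᶜ | x ≤ a} := by
    by_contra! h
    exact hA (domLE_of_card_filter_le h)
  set D := {x ∈ A | x ≤ a} with hD
  set Q := {x ∈ Aᶜ | ¬ x ≤ a} with hQ
  have hAmem : A ∈ ({A' | #A' = #B ∧ D ⊆ A' ∧ Disjoint Q A'} : Finset (Finset (Fin n))) := by
    have hDA : D ⊆ A := filter_subset _ _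
    have hQA : Disjoint Q A := disjoint_compl_left.mono_left (filter_subset _ _)
    simp only [mem_filter, mem_univ, true_and]
    exact ⟨hAB, hDA, hQA⟩
  have hrel := garnir_relation X D Q B
  rw [← add_sum_erase _ _ hAmem] at hrel
  rw [eq_sub_of_add_eq hrel]
  refine M.sub_mem (M.sum_mem fun J hJ => M.zsmul_mem (M.sum_mem fun C hC => ?_) _)
    (M.sum_mem fun A' hA' => ?_)
  · rw [← lap_compl]
    have hQc : #{x ∈ Aᶜ | x ≤ a} + #Q = #Aᶜ := card_filter_add_card_filter_not _
    have hJc : #(Q ∪ J) ≤ #Q + #D :=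
      (card_union_le _ _).trans (by gcongr; exact mem_powerset.1 hJ)
    have hC' := (mem_powersetCard.1 hC).2
    have hAc := card_add_card_compl A
    have hJcc := card_add_card_compl (Q ∪ J)
    exact hlarger _ _ (by rw [card_compl, card_compl, hC']) (by omega)
  · simp only [mem_erase, mem_filter, mem_univ, true_and] at hA'
    obtain ⟨hne, hcard, hDA', hQA'⟩ := hA'
    refine hsmaller A' hcard (indexSum_lt_of_sdiff a (by omega) hne ?_ ?_)
    · intro x hx
      by_contra hxa
      rw [mem_sdiff] at hx
      exact disjoint_left.1 hQA' (by simp [hQ, hx.2, not_le.1 hxa]) hx.1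
    · intro x hx
      by_contra! hxa
      rw [mem_sdiff] at hx
      exact hx.2 (hDA' (by simp [hD, hx.1, hxa]))

/-- Lexicographic induction: either the size of the sets grows, or the index sum drops. -/
theorem lap_mem_closure (A B : Finset (Fin n)) :
    lap X A B ∈ AddSubgroup.closure (Set.range fun g : {p : Finset (Fin n) × Finset (Fin n) //
      p.1.card = p.2.card ∧ goodSet p.1 ∧ goodSet p.2} => lap X g.1.1 g.1.2) := by
  by_cases hAB : #A = #B
  · by_cases hA : goodSet A
    · by_cases hB : goodSet B
      · exact AddSubgroup.subset_closure ⟨⟨(A, B), hAB, hA, hB⟩, rfl⟩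
      · rw [← lap_transpose]
        refine lap_mem_of_not_goodSet Xᵀ _ hAB.symm hB (fun _ _ _ _ => ?_) fun _ _ _ => ?_
        all_goals
          rw [lap_transpose]
          exact lap_mem_closure _ _
    · exact lap_mem_of_not_goodSet X _ hAB hA (fun _ _ _ _ => lap_mem_closure _ _)
        fun _ _ _ => lap_mem_closure _ _
  · rw [lap_eq_zero_of_card_ne X hAB]
    exact zero_mem _
termination_by (n - #A, indexSum A + indexSum B)
decreasing_by
  all_goals grind [card_finset_fin_le]

end Straightening

lemma exists_signed_sum_of_mem_closure_range {ι G : Type*} [AddCommGroup G] {f : ι → G} {x : G}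
    (hx : x ∈ AddSubgroup.closure (Set.range f)) :
    ∃ (k : ℕ) (g : Fin k → ι) (ε : Fin k → ℤ),
      (∀ i, ε i = 1 ∨ ε i = -1) ∧ x = ∑ i, ε i • f (g i) := by
  induction hx using AddSubgroup.closure_induction with
  | mem x hx =>
    obtain ⟨j, rfl⟩ := hx
    exact ⟨1, fun _ => j, fun _ => 1, fun _ => Or.inl rfl, by simp⟩
  | zero => exact ⟨0, Fin.elim0, Fin.elim0, fun i => i.elim0, by simp⟩
  | add x y _ _ hx hy =>
    obtain ⟨k, g, ε, hε, rfl⟩ := hx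
    obtain ⟨l, h, δ, hδ, rfl⟩ := hy
    refine ⟨k + l, Fin.append g h, Fin.append ε δ, fun i => ?_, ?_⟩
    · induction i using Fin.addCases with
      | left i => simpa only [Fin.append_left] using hε i
      | right i => simpa only [Fin.append_right] using hδ i
    · simp only [Fin.sum_univ_add, Fin.append_left, Fin.append_right]
  | neg x _ hx =>
    obtain ⟨k, g, ε, hε, rfl⟩ := hx
    refine ⟨k, g, fun i => -ε i, fun i => ?_, ?_⟩
    · simpa only [neg_eq_iff_eq_neg, neg_neg] using (hε i).symm
    · simp only [neg_smul, sum_neg_distrib]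

section LinearIndependence

lemma linearIndependent_of_triangular {ι α M R : Type*} [LinearOrder α] [Ring R] [AddCommGroup M]
    [Module R M] {v : ι → M} (φ : ι → M →ₗ[R] R) (f : ι → α) (hdiag : ∀ i, IsUnit (φ i (v i)))
    (hlt : ∀ i j, φ i (v j) ≠ 0 → j ≠ i → f j < f i) : LinearIndependent R v := by
  rw [linearIndependent_iff]
  intro c hc
  by_contra hne
  obtain ⟨i, hi, hmin⟩ := exists_min_image c.support f (Finsupp.support_nonempty_iff.2 hne)
  have hother (j) (hj : j ∈ c.support) (hji : j ≠ i) : c j • φ i (v j) = 0 := by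
    by_contra h
    exact (hlt i j (right_ne_zero_of_smul h) hji).not_ge (hmin j hj)
  have heval : c i • φ i (v i) = 0 := by
    rw [← map_zero (φ i), ← hc, Finsupp.linearCombination_apply, Finsupp.sum, map_sum,
      sum_eq_single_of_mem i hi fun j hj hji => by rw [map_smul, hother j hj hji], map_smul]
  exact Finsupp.mem_support_iff.1 hi ((hdiag i).mul_left_eq_zero.1 heval)

variable {A B C D : Finset (Fin n)}

/-- The position of `x`, counted from `0`, within its own block of the partition `{A, Ã}`. -/
def blockRank (A : Finset (Fin n)) (x : Fin n) : ℕ := #{y | y < x ∧ (y ∈ A ↔ x ∈ A)}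

lemma blockRank_compl (A : Finset (Fin n)) : blockRank Aᶜ = blockRank A := by
  funext x
  simp only [blockRank, mem_compl, not_iff_not]

lemma blockRank_orderEmbOfFin (hA : #A = m) (p : Fin m) :
    blockRank A (A.orderEmbOfFin hA p) = p := by
  rw [← card_filter_lt_orderEmbOfFin hA p, blockRank]
  congr 1
  ext y
  simp only [mem_filter, mem_univ, true_and, orderEmbOfFin_mem, iff_true, and_comm]

lemma exists_le_blockRank_eq (hA : goodSet A) (x : Fin n) :
    ∃ a ∈ A, a ≤ x ∧ blockRank A a = blockRank A x := by
  by_cases hx : x ∈ A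
  · exact ⟨x, hx, le_rfl, rfl⟩
  obtain ⟨p, rfl⟩ : x ∈ Set.range (Aᶜ.orderEmbOfFin rfl) := by
    rwa [range_orderEmbOfFin, mem_coe, mem_compl]
  obtain ⟨hcard, hle⟩ := (domLE_iff_orderEmbOfFin rfl rfl).1 hA
  refine ⟨_, orderEmbOfFin_mem A rfl (Fin.castLE hcard p), hle p, ?_⟩
  rw [blockRank_orderEmbOfFin, ← blockRank_compl, blockRank_orderEmbOfFin, Fin.val_castLE]

/-- A weight on subsets that increases both when elements are added and when they are lowered,
used to order the good Laplace products. -/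
def coweight (A : Finset (Fin n)) : ℕ := ∑ x ∈ A, (n - x)

lemma coweight_lt_of_injOn {f : Fin n → Fin n} (hf : Set.InjOn f C) (hmaps : ∀ x ∈ C, f x ∈ A)
    (hle : ∀ x ∈ C, f x ≤ x) (hne : C ≠ A) : coweight C < coweight A := by
  have himage : C.image f ⊆ A := image_subset_iff.2 hmaps
  have hsum : coweight (C.image f) = ∑ x ∈ C, (n - f x) := sum_image hf
  have hmono (x) (hx : x ∈ C) : n - (x : ℕ) ≤ n - f x := Nat.sub_le_sub_left (hle x hx) n
  rcases himage.eq_or_ssubset with heq | hssub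
  · obtain ⟨x, hx, hfx⟩ : ∃ x ∈ C, f x ≠ x := by
      by_contra! hid
      exact hne (by rw [← heq, image_congr hid, image_id'])
    rw [← heq, hsum]
    refine sum_lt_sum hmono ⟨x, hx, ?_⟩
    have hlt : f x < x := (hle x hx).lt_of_ne hfx
    omega
  · obtain ⟨a, ha, haf⟩ := exists_of_ssubset hssub
    calc coweight C ≤ ∑ x ∈ C, (n - f x) := sum_le_sum hmono
      _ = coweight (C.image f) := hsum.symm
      _ < coweight A := sum_lt_sum_of_subset himage ha haf (Nat.sub_pos_of_lt a.2)
        fun _ _ _ => Nat.zero_le _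

/-- The map sending `x` to the element of `A` of the same block rank is injective on `C`,
and it does not increase `x` because `A` is good. -/
lemma coweight_lt_of_injOn_blockRank (hA : goodSet A) (hC : Set.InjOn (blockRank A) C)
    (hne : C ≠ A) : coweight C < coweight A := by
  choose f hfA hfle hfrank using exists_le_blockRank_eq hA
  refine coweight_lt_of_injOn (f := f) (fun x hx y hy hxy => hC hx hy ?_) (fun x _ => hfA x)
    (fun x _ => hfle x) hne
  rw [← hfrank, hxy, hfrank]

variable {R : Type*} [CommRing R]

/-- The `0`-`1` matrix with a `1` where the block ranks for `A` and `B` agree; among the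
good Laplace products only `X{A|B}` and some of smaller `coweight` do not vanish on it. -/
def rankMatrix (R : Type*) [CommRing R] (A B : Finset (Fin n)) : Matrix (Fin n) (Fin n) R :=
  Matrix.of fun i j => if blockRank A i = blockRank B j then 1 else 0

lemma rankMatrix_compl : rankMatrix R Aᶜ Bᶜ = rankMatrix R A B := by
  simp only [rankMatrix, blockRank_compl]

lemma rankMatrix_transpose : (rankMatrix R A B)ᵀ = rankMatrix R B A := by
  ext i j
  simp only [rankMatrix, Matrix.transpose_apply, Matrix.of_apply, eq_comm]

lemma minorM_rankMatrix_self (hAB : #A = #B) : minorM (rankMatrix R A B) A B = 1 := by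
  rw [minorM_eq_det _ hAB rfl, ← Matrix.det_one (n := Fin #B)]
  congr 1
  ext p q
  simp only [rankMatrix, Matrix.submatrix_apply, Matrix.of_apply, blockRank_orderEmbOfFin,
    Fin.val_inj, Matrix.one_apply]

lemma isUnit_lap_rankMatrix_self (hAB : #A = #B) : IsUnit (lap (rankMatrix R A B) A B) := by
  have hABc : #Aᶜ = #Bᶜ := by rw [card_compl, card_compl, hAB]
  rw [lap, minorM_rankMatrix_self hAB, ← rankMatrix_compl, minorM_rankMatrix_self hABc,
    mul_one, mul_one]
  exact isUnit_one.neg.pow _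

lemma injOn_blockRank_of_minorM_ne_zero (h : minorM (rankMatrix R A B) C D ≠ 0) :
    Set.InjOn (blockRank A) C := by
  intro x hx y hy hxy
  by_contra hne
  have hCD : #C = #D := by
    by_contra hCD
    exact h (dif_neg hCD)
  rw [← range_orderEmbOfFin C hCD] at hx hy
  obtain ⟨⟨p, rfl⟩, q, rfl⟩ := And.intro hx hy
  rw [minorM_eq_det _ hCD rfl] at h
  refine h (Matrix.det_zero_of_row_eq (fun hpq => hne (hpq ▸ rfl)) (i := p) (j := q) ?_)
  funext j
  simp only [rankMatrix, Matrix.submatrix_apply, Matrix.of_apply, hxy]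

lemma injOn_blockRank_of_lap_ne_zero (h : lap (rankMatrix R A B) C D ≠ 0) :
    Set.InjOn (blockRank A) C ∧ Set.InjOn (blockRank B) D := by
  have hminor : minorM (rankMatrix R A B) C D ≠ 0 :=
    left_ne_zero_of_mul (right_ne_zero_of_mul h)
  refine ⟨injOn_blockRank_of_minorM_ne_zero hminor, ?_⟩
  rw [← minorM_transpose, rankMatrix_transpose] at hminor
  exact injOn_blockRank_of_minorM_ne_zero hminor

lemma minorM_map {S : Type*} [CommRing S] (f : R →+* S) (X : Matrix (Fin m) (Fin n) R)
    (A : Finset (Fin m)) (B : Finset (Fin n)) : minorM (X.map f) A B = f (minorM X A B) := by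
  by_cases hAB : #A = #B
  · rw [minorM_eq_det _ hAB rfl, minorM_eq_det _ hAB rfl, RingHom.map_det]
    rfl
  · rw [minorM, minorM, dif_neg hAB, dif_neg hAB, map_zero]

lemma lap_map {S : Type*} [CommRing S] (f : R →+* S) (X : Matrix (Fin n) (Fin n) R)
    (A B : Finset (Fin n)) : lap (X.map f) A B = f (lap X A B) := by
  simp only [lap, minorM_map, map_mul, map_pow, map_neg, map_one]

lemma aeval_lap_genX (Y : Matrix (Fin n) (Fin n) R) (C D : Finset (Fin n)) :
    MvPolynomial.aeval (fun p : Fin n × Fin n => Y p.1 p.2) (lap (genX n n R) C D) =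
      lap Y C D := by
  rw [← AlgHom.coe_toRingHom, ← lap_map]
  congr 1
  ext i j
  simp [genX]

theorem linearIndependent_goodLap (n : ℕ) (R : Type*) [CommRing R] :
    LinearIndependent R (goodLap n R) := by
  refine linearIndependent_of_triangular
    (fun g => (MvPolynomial.aeval fun p => rankMatrix R g.1.1 g.1.2 p.1 p.2).toLinearMap)
    (fun g => coweight g.1.1 + coweight g.1.2) (fun g => ?_) fun g h hne hgh => ?_
  · rw [AlgHom.toLinearMap_apply, goodLap, aeval_lap_genX]
    exact isUnit_lap_rankMatrix_self g.2.1
  · rw [AlgHom.toLinearMap_apply, goodLap, aeval_lap_genX] at hne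
    obtain ⟨hrow, hcol⟩ := injOn_blockRank_of_lap_ne_zero hne
    by_cases hA : h.1.1 = g.1.1
    · have hB : h.1.2 ≠ g.1.2 := fun hB => hgh (Subtype.ext (Prod.ext hA hB))
      rw [hA]
      exact Nat.add_lt_add_left (coweight_lt_of_injOn_blockRank g.2.2.2 hcol hB) _
    · refine add_lt_add_of_lt_of_le (coweight_lt_of_injOn_blockRank g.2.2.1 hrow hA) ?_
      rcases eq_or_ne h.1.2 g.1.2 with hB | hB
      · rw [hB]
      · exact (coweight_lt_of_injOn_blockRank g.2.2.2 hcol hB).le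

end LinearIndependence

end LaplaceProduct

/-- For the generic matrix over a nonzero commutative ring, the Laplace products
`X{A|B}` with `|A| = |B|` and `A`, `B` good form a basis of the `R`-submodule spanned
by all Laplace products: they are linearly independent, they span the same submodule,
and every Laplace product is a `±1`-linear combination of them. -/
theorem statement17 (n : ℕ) (R : Type*) [CommRing R] [Nontrivial R] :
    LinearIndependent R (goodLap n R) ∧
    Submodule.span R (Set.range (goodLap n R)) =
      Submodule.span R {q : MvPolynomial (Fin n × Fin n) R |
        ∃ S T : Finset (Fin n), q = lap (genX n n R) S T} ∧
    ∀ S T : Finset (Fin n),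
      ∃ (k : ℕ) (g : Fin k → {p : Finset (Fin n) × Finset (Fin n) //
          p.1.card = p.2.card ∧ goodSet p.1 ∧ goodSet p.2}) (ε : Fin k → ℤ),
        (∀ i, ε i = 1 ∨ ε i = -1) ∧
        lap (genX n n R) S T = ∑ i, (ε i : R) • goodLap n R (g i) := by
  have hspan (S T : Finset (Fin n)) :
      lap (genX n n R) S T ∈ Submodule.span R (Set.range (goodLap n R)) :=
    (AddSubgroup.closure_le (Submodule.span R _).toAddSubgroup).2 Submodule.subset_span
      (LaplaceProduct.lap_mem_closure (genX n n R) S T)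
  refine ⟨LaplaceProduct.linearIndependent_goodLap n R, le_antisymm ?_ ?_, fun S T => ?_⟩
  · exact Submodule.span_mono (Set.range_subset_iff.2 fun g => ⟨g.1.1, g.1.2, rfl⟩)
  · rw [Submodule.span_le]
    rintro _ ⟨S, T, rfl⟩
    exact hspan S T
  · simp only [Int.cast_smul_eq_zsmul]
    exact LaplaceProduct.exists_signed_sum_of_mem_closure_range
      (LaplaceProduct.lap_mem_closure (genX n n R) S T)
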